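/- arXiv:2311.09203 — 3 statements merged into one kernel-verified Lean document; each statement's English description precedes it below -/
import Mathlib

section
/- Let 0<α<1 and β:=1/α. There exists a constant M₀>0 depending only on β such that for every ε∈(0,M₀) there is n₀ with the following property: for all integers n≥n₀ and m with 1 ≤ m ≤ (M₀−ε)·n^{β/(β+1)}, the system n = ∑_{k≥1} k·g(k)/(e^{kr−ρ}+1), m = ∑_{k≥1} g(k)/(e^{kr−ρ}+1) has a unique solution (r,ρ) with r>0 and ρ∈ℝ. -/
open Real

/-- `g α k` is the number of positive integers `n` with `⌊n^α⌋ = k`. -/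
noncomputable def g (α : ℝ) (k : ℕ) : ℕ :=
  Set.ncard {n : ℕ | 1 ≤ n ∧ ⌊(n : ℝ) ^ α⌋ = (k : ℤ)}

/-- The Fermi weight. -/
noncomputable def fd (x : ℝ) : ℝ := (Real.exp x + 1)⁻¹

lemma fd_pos (x : ℝ) : 0 < fd x := by unfold fd; positivity

lemma fd_le_exp (x : ℝ) : fd x ≤ Real.exp (-x) := by
  unfold fd
  rw [Real.exp_neg]
  apply inv_anti₀ (Real.exp_pos x); linarith

lemma fd_anti : StrictAnti fd := by
  intro x y h
  unfold fd
  apply inv_strictAnti₀ (by positivity)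
  have := Real.exp_lt_exp.2 h
  linarith

lemma fd_cont : Continuous fd := by
  unfold fd
  apply Continuous.inv₀ (by fun_prop)
  intro x; positivity

lemma fd_lower (x y : ℝ) (hx : 0 ≤ x) : Real.exp (-x) * fd y ≤ fd (x + y) := by
  unfold fd
  rw [Real.exp_neg, ← mul_inv]
  apply inv_anti₀ (by positivity)
  rw [Real.exp_add]
  have := Real.one_le_exp hx
  nlinarith [Real.exp_pos y]

noncomputable def TT (w a : ℕ → ℝ) (r ρ : ℝ) : ℝ := ∑' j, w j * fd (a j * r - ρ)

section abstr
variable {w a : ℕ → ℝ}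

lemma TT_bound (hw : ∀ j, 0 ≤ w j ∧ w j ≤ a j) {r₀ R r ρ : ℝ} (hr : r₀ ≤ r) (hρ : ρ ≤ R) (j : ℕ) :
    w j * fd (a j * r - ρ) ≤ Real.exp R * (a j * Real.exp (-(a j * r₀))) := by
  have h1 : fd (a j * r - ρ) ≤ Real.exp R * Real.exp (-(a j * r₀)) := by
    refine (fd_le_exp _).trans ?_
    rw [← Real.exp_add]
    apply Real.exp_le_exp.2
    have : a j * r₀ ≤ a j * r := mul_le_mul_of_nonneg_left hr ((hw j).1.trans (hw j).2)
    linarith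
  calc w j * fd (a j * r - ρ) ≤ a j * (Real.exp R * Real.exp (-(a j * r₀))) :=
        mul_le_mul (hw j).2 h1 (fd_pos _).le ((hw j).1.trans (hw j).2)
    _ = _ := by ring

lemma TT_summable (hw : ∀ j, 0 ≤ w j ∧ w j ≤ a j)
    (hs : ∀ r : ℝ, 0 < r → Summable fun j => a j * Real.exp (-(a j * r))) {r : ℝ} (hr : 0 < r) (ρ : ℝ) :
    Summable fun j => w j * fd (a j * r - ρ) :=
  Summable.of_nonneg_of_le (fun j => mul_nonneg (hw j).1 (fd_pos _).le)
    (fun j => TT_bound hw le_rfl le_rfl j) ((hs r hr).mul_left _)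

lemma TT_cont (hw : ∀ j, 0 ≤ w j ∧ w j ≤ a j)
    (hs : ∀ r : ℝ, 0 < r → Summable fun j => a j * Real.exp (-(a j * r))) {r : ℝ} (hr : 0 < r) (ρ : ℝ) :
    ContinuousAt (fun p : ℝ × ℝ => TT w a p.1 p.2) (r, ρ) := by
  have hopen : IsOpen {p : ℝ × ℝ | r / 2 < p.1 ∧ p.2 < ρ + 1} :=
    (isOpen_lt continuous_const continuous_fst).inter (isOpen_lt continuous_snd continuous_const)
  have : ContinuousOn (fun p : ℝ × ℝ => TT w a p.1 p.2) {p : ℝ × ℝ | r / 2 < p.1 ∧ p.2 < ρ + 1} := by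
    unfold TT
    refine continuousOn_tsum (u := fun j => Real.exp (ρ + 1) * (a j * Real.exp (-(a j * (r / 2)))))
      ?_ ((hs (r/2) (by linarith)).mul_left _) ?_
    · intro j
      apply Continuous.continuousOn
      have := fd_cont
      fun_prop
    · intro j p hp
      rw [Real.norm_of_nonneg (mul_nonneg (hw j).1 (fd_pos _).le)]
      exact TT_bound hw hp.1.le hp.2.le j
  exact this.continuousAt (hopen.mem_nhds ⟨by simp; linarith, by simp⟩)

lemma exists_unique_abs (h1 : ∀ j, 1 ≤ a j)
    (hs : ∀ r : ℝ, 0 < r → Summable fun j => a j * Real.exp (-(a j * r)))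
    (hinf : Filter.Tendsto a Filter.atTop Filter.atTop)
    (n m : ℝ) (hm : 1 ≤ m) (hn : 0 < n)
    (hex : ∃ r : ℝ, 0 < r ∧ ∀ ρ, TT (fun _ => 1) a r ρ = m → TT a a r ρ ≤ n) :
    ∃! p : ℝ × ℝ, 0 < p.1 ∧ n = TT a a p.1 p.2 ∧ m = TT (fun _ => 1) a p.1 p.2 := by
  have hw1 : ∀ j, 0 ≤ (fun _ : ℕ => (1:ℝ)) j ∧ (fun _ : ℕ => (1:ℝ)) j ≤ a j :=
    fun j => ⟨zero_le_one, h1 j⟩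
  have hwa : ∀ j, 0 ≤ a j ∧ a j ≤ a j := fun j => ⟨zero_le_one.trans (h1 j), le_rfl⟩
  have hmono : ∀ r, 0 < r → StrictMono (fun ρ => TT (fun _ => 1) a r ρ) := by
    intro r hr ρ ρ' h
    have hlt : ∀ j, (1:ℝ) * fd (a j * r - ρ) < 1 * fd (a j * r - ρ') := by
      intro j
      have := fd_anti (show a j * r - ρ' < a j * r - ρ by linarith)
      linarith
    exact Summable.tsum_lt_tsum (i := 0) (fun j => (hlt j).le) (hlt 0)
      (TT_summable hw1 hs hr ρ) (TT_summable hw1 hs hr ρ')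
  have hρ : ∀ r, 0 < r → ∃ ρ, TT (fun _ => 1) a r ρ = m := by
    intro r hr
    have hc : Continuous (fun ρ => TT (fun _ => 1) a r ρ) := by
      rw [continuous_iff_continuousAt]
      intro ρ
      exact (TT_cont hw1 hs hr ρ).comp (f := fun ρ => (r, ρ)) (by fun_prop)
    have hlow : ∃ ρ, TT (fun _ => 1) a r ρ ≤ m := by
      set S := ∑' j, a j * Real.exp (-(a j * r)) with hS
      have hS0 : 0 ≤ S := tsum_nonneg fun j => mul_nonneg (hwa j).1 (Real.exp_pos _).le
      refine ⟨-S, ?_⟩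
      have : TT (fun _ => 1) a r (-S) ≤ Real.exp (-S) * S := by
        rw [hS, ← tsum_mul_left]
        exact Summable.tsum_le_tsum (fun j => TT_bound hw1 le_rfl le_rfl j)
          (TT_summable hw1 hs hr _) ((hs r hr).mul_left _)
      have h2 : Real.exp (-S) * S ≤ 1 := by
        rw [Real.exp_neg, inv_mul_le_iff₀ (Real.exp_pos _)]
        linarith [Real.add_one_le_exp S]
      linarith
    have hhigh : ∃ ρ, m ≤ TT (fun _ => 1) a r ρ := by
      obtain ⟨L, hL⟩ := exists_nat_ge (2 * m)
      set A := ∑ j ∈ Finset.range L, a j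
      refine ⟨A * r, ?_⟩
      have hsum := (TT_summable hw1 hs hr (A*r)).sum_le_tsum (Finset.range L)
        (fun j _ => mul_nonneg zero_le_one (fd_pos _).le)
      have : ∑ j ∈ Finset.range L, (1/2:ℝ) ≤ ∑ j ∈ Finset.range L, 1 * fd (a j * r - A * r) := by
        apply Finset.sum_le_sum
        intro j hj
        have hjA : a j ≤ A := Finset.single_le_sum (fun i _ => (hwa i).1) hj
        have : fd 0 ≤ fd (a j * r - A * r) := fd_anti.antitone (by nlinarith)
        have h0 : fd 0 = 1/2 := by unfold fd; norm_num
        linarith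
      simp only [Finset.sum_const, Finset.card_range, nsmul_eq_mul] at this
      unfold TT
      linarith
    obtain ⟨x, hx⟩ := hlow
    obtain ⟨y, hy⟩ := hhigh
    exact mem_range_of_exists_le_of_exists_ge hc ⟨x, hx⟩ ⟨y, hy⟩
  choose! R hR using hρ
  have hRc : ∀ r, 0 < r → ContinuousAt R r := by
    intro r hr
    rw [Metric.continuousAt_iff']
    intro ε hε
    have e1 : TT (fun _ => 1) a r (R r - ε) < m := by
      rw [← hR r hr]; exact hmono r hr (by linarith)
    have e2 : m < TT (fun _ => 1) a r (R r + ε) := by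
      conv_lhs => rw [← hR r hr]
      exact hmono r hr (by linarith)
    have c : ∀ ρ, ContinuousAt (fun r => TT (fun _ => 1) a r ρ) r := fun ρ =>
      (TT_cont hw1 hs hr ρ).comp (f := fun r => (r, ρ)) (by fun_prop)
    filter_upwards [(c _).eventually_lt_const e1, (c _).eventually_const_lt e2, lt_mem_nhds hr]
      with s h1 h2 h3
    rw [← hR s h3] at h1 h2
    have h1' := (hmono s h3).lt_iff_lt.1 h1
    have h2' := (hmono s h3).lt_iff_lt.1 h2
    rw [Real.dist_eq, abs_lt]; constructor <;> linarith
  have hφc : ContinuousOn (fun r => TT a a r (R r)) (Set.Ioi 0) := by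
    intro r hr
    apply ContinuousAt.continuousWithinAt
    exact (TT_cont hwa hs hr (R r)).comp (f := fun r => (r, R r)) (continuousAt_id.prodMk (hRc r hr))
  have hbig : ∃ r, 0 < r ∧ n ≤ TT a a r (R r) := by
    obtain ⟨J, hJ⟩ := (hinf.eventually_ge_atTop (2 * n)).exists_forall_of_atTop
    obtain ⟨L, hL⟩ := exists_nat_ge (2 * Real.exp 1 * (J + 1))
    have hLpos : (0:ℝ) < L := lt_of_lt_of_le (by positivity) hL
    set A := 1 + ∑ j ∈ Finset.range L, a j with hA
    have hApos : 0 < A := by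
      have : 0 ≤ ∑ j ∈ Finset.range L, a j := Finset.sum_nonneg fun i _ => (hwa i).1
      linarith
    have hr : 0 < 1 / A := by positivity
    refine ⟨1 / A, hr, ?_⟩
    set ρ := R (1 / A) with hρ
    have hMr : TT (fun _ => 1) a (1/A) ρ = m := hR _ hr
    have hsm := TT_summable hw1 hs hr ρ
    have hsn := TT_summable hwa hs hr ρ
    have hq : L * (Real.exp (-1) * fd (-ρ)) ≤ m := by
      rw [← hMr]
      have hsum := hsm.sum_le_tsum (Finset.range L)
        (fun j _ => mul_nonneg zero_le_one (fd_pos _).le)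
      refine le_trans ?_ hsum
      rw [← nsmul_eq_mul, ← Finset.card_range L, ← Finset.sum_const, Finset.card_range]
      apply Finset.sum_le_sum
      intro j hj
      have hjA : a j ≤ A := by
        have := Finset.single_le_sum (fun i _ => (hwa i).1) hj
        linarith
      have h := fd_lower (a j * (1/A)) (-ρ) (mul_nonneg (hwa j).1 hr.le)
      have : a j * (1/A) ≤ 1 := by rw [mul_one_div, div_le_one hApos]; exact hjA
      have h' : Real.exp (-1) ≤ Real.exp (-(a j * (1/A))) := Real.exp_le_exp.2 (by linarith)
      have := mul_le_mul_of_nonneg_right h' (fd_pos (-ρ)).le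
      rw [one_mul, sub_eq_add_neg]
      linarith
    have hfin : ∑ j ∈ Finset.range J, fd (a j * (1/A) - ρ) ≤ m / 2 := by
      have : ∑ j ∈ Finset.range J, fd (a j * (1/A) - ρ) ≤ ∑ j ∈ Finset.range J, fd (-ρ) := by
        apply Finset.sum_le_sum
        intro j hj
        apply fd_anti.antitone
        have := mul_nonneg (hwa j).1 hr.le
        linarith
      simp only [Finset.sum_const, Finset.card_range, nsmul_eq_mul] at this
      have h3 : 2 * (J + 1) * fd (-ρ) ≤ L * (Real.exp (-1) * fd (-ρ)) := by
        rw [← mul_assoc]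
        apply mul_le_mul_of_nonneg_right _ (fd_pos _).le
        rw [Real.exp_neg, ← div_eq_mul_inv, le_div_iff₀ (Real.exp_pos _)]
        linarith
      nlinarith [fd_pos (-ρ)]
    have key : ∑' j, 2 * n * (1 * fd (a j * (1/A) - ρ)) -
        ∑ j ∈ Finset.range J, 2 * n * (1 * fd (a j * (1/A) - ρ)) ≤ TT a a (1/A) ρ := by
      have hs2 := hsm.mul_left (2 * n)
      have e1 := hs2.sum_add_tsum_nat_add J
      have e2 := hsn.sum_add_tsum_nat_add J
      have h4 : ∑' j, 2 * n * (1 * fd (a (j + J) * (1/A) - ρ)) ≤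
          ∑' j, a (j + J) * fd (a (j+J) * (1/A) - ρ) := by
        refine Summable.tsum_le_tsum (fun j => ?_) ((summable_nat_add_iff J).2 hs2)
          ((summable_nat_add_iff J).2 hsn)
        rw [one_mul]
        exact mul_le_mul_of_nonneg_right (hJ _ (by omega)) (fd_pos _).le
      have h5 : 0 ≤ ∑ j ∈ Finset.range J, a j * fd (a j * (1/A) - ρ) :=
        Finset.sum_nonneg fun j _ => mul_nonneg (hwa j).1 (fd_pos _).le
      unfold TT
      linarith
    rw [tsum_mul_left, ← Finset.mul_sum] at key
    simp only [one_mul] at key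
    unfold TT at hMr
    simp only [one_mul] at hMr
    rw [hMr] at key
    nlinarith
  obtain ⟨r₁, hr₁, hb⟩ := hbig
  obtain ⟨r₂, hr₂, hsml⟩ := hex
  have hivt := isPreconnected_Ioi.intermediate_value (a := r₂) (b := r₁) hr₂ hr₁ hφc
  obtain ⟨r, hr, hrn⟩ := hivt ⟨hsml _ (hR _ hr₂), hb⟩
  refine ⟨(r, R r), ⟨hr, hrn.symm, (hR r hr).symm⟩, ?_⟩
  rintro ⟨s, σ⟩ ⟨hs0, hsn, hsm⟩
  simp only at hs0 hsn hsm
  have hN : TT a a s σ = TT a a r (R r) := by rw [← hsn]; exact hrn.symm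
  have hM : TT (fun _ => 1) a s σ = TT (fun _ => 1) a r (R r) := by rw [← hsm]; exact (hR r hr).symm
  have H := (((TT_summable hwa hs hs0 σ).hasSum.sub (TT_summable hwa hs hr (R r)).hasSum).mul_left (r - s)).sub
    (((TT_summable hw1 hs hs0 σ).hasSum.sub (TT_summable hw1 hs hr (R r)).hasSum).mul_left (R r - σ))
  unfold TT at hN hM
  rw [hN, hM] at H
  simp only [sub_self, mul_zero] at H
  have hnn : ∀ j, 0 ≤ (r - s) * (a j * fd (a j * s - σ) - a j * fd (a j * r - R r)) -
      (R r - σ) * (1 * fd (a j * s - σ) - 1 * fd (a j * r - R r)) := by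
    intro j
    have : (r - s) * (a j * fd (a j * s - σ) - a j * fd (a j * r - R r)) -
      (R r - σ) * (1 * fd (a j * s - σ) - 1 * fd (a j * r - R r)) =
      ((a j * r - R r) - (a j * s - σ)) * (fd (a j * s - σ) - fd (a j * r - R r)) := by ring
    rw [this]
    rcases le_total (a j * r - R r) (a j * s - σ) with h | h
    · have := fd_anti.antitone h
      nlinarith
    · have := fd_anti.antitone h
      apply mul_nonneg <;> linarith
  have hz := (hasSum_zero_iff_of_nonneg hnn).1 H
  have heq : ∀ j, a j * s - σ = a j * r - R r := by
    intro j
    have hzj := congrFun hz j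
    simp only [Pi.zero_apply] at hzj
    have : ((a j * r - R r) - (a j * s - σ)) * (fd (a j * s - σ) - fd (a j * r - R r)) = 0 := by
      rw [← hzj]; ring
    rcases mul_eq_zero.1 this with h | h
    · linarith
    · exact fd_anti.injective (by linarith)
  obtain ⟨j, hj⟩ := (hinf.eventually_gt_atTop (a 0)).exists
  have q0 := heq 0
  have q1 := heq j
  have : (a j - a 0) * (s - r) = 0 := by linear_combination q1 - q0
  have hsr : s = r := by
    rcases mul_eq_zero.1 this with h | h <;> linarith
  subst hsr
  ext
  · rfl
  · simp only; linarith

end abstr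

/-- the sequence of floors -/
noncomputable def aN (α : ℝ) (j : ℕ) : ℕ := ⌊((j + 1 : ℕ) : ℝ) ^ α⌋₊

lemma g_eq (α : ℝ) (k : ℕ) : g α k = Nat.card (aN α ⁻¹' {k}) := by
  unfold g
  rw [Nat.card_coe_set_eq, ← Set.ncard_image_of_injective (aN α ⁻¹' {k}) Nat.succ_injective]
  congr 1
  ext n
  simp only [Set.mem_ofPred_eq, Set.mem_image, Set.mem_preimage, Set.mem_singleton_iff]
  have key : ∀ x : ℕ, (⌊(x : ℝ) ^ α⌋ = (k : ℤ)) ↔ ⌊(x : ℝ) ^ α⌋₊ = k := by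
    intro x
    rw [← Int.natCast_floor_eq_floor (by positivity)]
    norm_cast
  constructor
  · rintro ⟨h1, h2⟩
    refine ⟨n - 1, ?_, by simp; omega⟩
    unfold aN
    rw [Nat.sub_add_cancel h1]
    exact (key n).1 h2
  · rintro ⟨j, hj, rfl⟩
    exact ⟨by simp, (key _).2 hj⟩

lemma tsum_reindex (α : ℝ) (h : ℕ → ℝ) (hs : Summable fun j => h (aN α j)) :
    ∑' k, (g α k : ℝ) * h k = ∑' j, h (aN α j) := by
  let e := Equiv.sigmaFiberEquiv (aN α)
  have hs' : Summable ((fun j => h (aN α j)) ∘ e) := (e.summable_iff).2 hs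
  rw [← e.tsum_eq (fun j => h (aN α j))]
  refine Eq.trans ?_ (Summable.tsum_sigma hs').symm
  congr 1
  ext k
  have : ∀ c : {x // aN α x = k}, h (aN α (e ⟨k, c⟩)) = h k := by
    rintro ⟨c, hc⟩
    simp [e, Equiv.sigmaFiberEquiv, hc]
  refine Eq.trans ?_ (tsum_congr this).symm
  rw [tsum_const, nsmul_eq_mul, g_eq]
  rfl

lemma telesc (Y : ℝ) (hY : 0 < Y) (N : ℕ) :
    ∑ j ∈ Finset.range N, 1 / (1 + ((j + 1 : ℕ) : ℝ) / Y) ^ 2 ≤ Y - Y ^ 2 / (Y + N) := by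
  induction N with
  | zero => simp; field_simp; simp
  | succ N ih =>
    rw [Finset.sum_range_succ]
    have : 1 / (1 + ((N + 1 : ℕ) : ℝ) / Y) ^ 2 ≤ Y ^ 2 / (Y + N) - Y ^ 2 / (Y + (N + 1 : ℕ)) := by
      have hN : (0:ℝ) ≤ N := N.cast_nonneg
      push_cast
      have e1 : 1 / (1 + ((N:ℝ) + 1) / Y) ^ 2 = Y ^ 2 / (Y + (N + 1)) ^ 2 := by
        field_simp
      have e2 : Y ^ 2 / (Y + N) - Y ^ 2 / (Y + (N + 1)) = Y ^ 2 / ((Y + N) * (Y + (N + 1))) := by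
        field_simp; ring
      rw [e1, e2]
      apply div_le_div_of_nonneg_left (by positivity) (by positivity)
      nlinarith
    linarith

lemma term_bound (α : ℝ) (hα : 0 < α) (p : ℕ) (hp : 2 / α ≤ p) (X : ℝ) (hX : 1 ≤ X) (j : ℕ) :
    (aN α j : ℝ) * Real.exp (-((aN α j : ℝ) * (1 / X))) ≤
      (4 * Real.exp 1 * (p + 1).factorial * X) * (1 / (1 + ((j + 1 : ℕ) : ℝ) / X ^ (1 / α)) ^ 2) := by
  have hX0 : 0 < X := by linarith
  set A : ℝ := (aN α j : ℝ)
  have hA : 0 ≤ A := Nat.cast_nonneg _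
  set x := A / X with hx
  have hx0 : 0 ≤ x := by positivity
  set z : ℝ := ((j + 1 : ℕ) : ℝ) with hz
  have hz0 : 0 < z := by rw [hz]; positivity
  set Y := X ^ (1 / α) with hY
  have hY0 : 0 < Y := by positivity
  have h1 : z ^ α ≤ A + 1 := (Nat.lt_floor_add_one _).le
  have h2 : z ^ α / X ≤ 1 + x := by
    rw [hx, div_le_iff₀ hX0, add_mul, div_mul_cancel₀ _ hX0.ne']; linarith
  have h3 : z / Y ≤ (1 + x) ^ (1 / α) := by
    have := Real.rpow_le_rpow (by positivity) h2 (show 0 ≤ 1 / α by positivity)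
    rwa [Real.div_rpow (by positivity) hX0.le, ← Real.rpow_mul hz0.le, mul_one_div_cancel hα.ne',
      Real.rpow_one] at this
  have h4 : 1 + z / Y ≤ 2 * (1 + x) ^ (1 / α) := by
    have := Real.one_le_rpow (show 1 ≤ 1 + x by linarith) (show 0 ≤ 1 / α by positivity)
    linarith
  have h5 : (1 + z / Y) ^ 2 ≤ 4 * (1 + x) ^ p := by
    calc (1 + z / Y) ^ 2 ≤ (2 * (1 + x) ^ (1 / α)) ^ 2 := by gcongr
      _ = 4 * (1 + x) ^ (2 / α) := by
        rw [mul_pow, ← Real.rpow_natCast, ← Real.rpow_natCast, ← Real.rpow_mul (by positivity)]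
        norm_num
        congr 1
        field_simp
      _ ≤ 4 * (1 + x) ^ (p : ℝ) := by
        gcongr
        linarith
      _ = _ := by rw [Real.rpow_natCast]
  have h6 : x * (1 + x) ^ p ≤ Real.exp 1 * (p + 1).factorial * Real.exp x := by
    have := Real.pow_div_factorial_le_exp (1 + x) (by positivity) (p + 1)
    rw [div_le_iff₀ (by positivity), Real.exp_add] at this
    calc x * (1 + x) ^ p ≤ (1 + x) * (1 + x) ^ p := by gcongr; linarith
      _ = (1 + x) ^ (p + 1) := by ring
      _ ≤ _ := this
      _ = _ := by ring
  have hAx : A = x * X := by rw [hx]; field_simp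
  rw [mul_one_div, mul_one_div, le_div_iff₀ (by positivity), Real.exp_neg, ← hx]
  calc A * (Real.exp x)⁻¹ * (1 + z / Y) ^ 2 ≤ A * (Real.exp x)⁻¹ * (4 * (1 + x) ^ p) := by gcongr
    _ = 4 * X * (Real.exp x)⁻¹ * (x * (1 + x) ^ p) := by rw [hAx]; ring
    _ ≤ 4 * X * (Real.exp x)⁻¹ * (Real.exp 1 * (p + 1).factorial * Real.exp x) := by gcongr
    _ = _ := by
      have := (Real.exp_pos x).ne'
      field_simp

lemma sum_bound (α : ℝ) (hα : 0 < α) (p : ℕ) (hp : 2 / α ≤ p) (X : ℝ) (hX : 1 ≤ X) :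
    Summable (fun j => (aN α j : ℝ) * Real.exp (-((aN α j : ℝ) * (1 / X)))) ∧
    ∑' j, (aN α j : ℝ) * Real.exp (-((aN α j : ℝ) * (1 / X))) ≤
      (4 * Real.exp 1 * (p + 1).factorial * X) * X ^ (1 / α) := by
  have hX0 : 0 < X := by linarith
  have hY0 : 0 < X ^ (1 / α) := by positivity
  have hb : ∀ N, ∑ j ∈ Finset.range N, (aN α j : ℝ) * Real.exp (-((aN α j : ℝ) * (1 / X))) ≤
      (4 * Real.exp 1 * (p + 1).factorial * X) * X ^ (1 / α) := by
    intro N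
    refine (Finset.sum_le_sum fun j _ => term_bound α hα p hp X hX j).trans ?_
    rw [← Finset.mul_sum]
    gcongr
    refine (telesc _ hY0 N).trans ?_
    have : 0 ≤ (X ^ (1 / α)) ^ 2 / (X ^ (1 / α) + N) := by positivity
    linarith
  have hnn : ∀ j, 0 ≤ (aN α j : ℝ) * Real.exp (-((aN α j : ℝ) * (1 / X))) := fun j => by positivity
  exact ⟨summable_of_sum_range_le hnn hb, Real.tsum_le_of_sum_range_le hnn hb⟩

lemma aN_summable (α : ℝ) (hα : 0 < α) (r : ℝ) (hr : 0 < r) :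
    Summable (fun j => (aN α j : ℝ) * Real.exp (-((aN α j : ℝ) * r))) := by
  obtain ⟨p, hp⟩ := exists_nat_ge (2 / α)
  have h := (sum_bound α hα p hp (max 1 (1 / r)) (le_max_left _ _)).1
  refine Summable.of_nonneg_of_le (fun j => by positivity) (fun j => ?_) h
  gcongr
  rw [div_le_iff₀ (by positivity)]
  calc (1:ℝ) = r * (1 / r) := by field_simp
    _ ≤ _ := by gcongr; exact le_max_right _ _

lemma aN_tendsto (α : ℝ) (hα : 0 < α) :
    Filter.Tendsto (fun j => (aN α j : ℝ)) Filter.atTop Filter.atTop := by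
  apply tendsto_natCast_atTop_atTop.comp
  apply tendsto_nat_floor_atTop.comp
  apply (tendsto_rpow_atTop hα).comp
  exact tendsto_natCast_atTop_atTop.comp (Filter.tendsto_add_atTop_nat 1)

lemma aN_one_le (α : ℝ) (hα : 0 < α) (j : ℕ) : (1:ℝ) ≤ (aN α j : ℝ) := by
  have : 1 ≤ aN α j := by
    unfold aN
    apply Nat.le_floor
    push_cast
    apply Real.one_le_rpow _ hα.le
    linarith [(Nat.cast_nonneg j : (0:ℝ) ≤ j)]
  exact_mod_cast this

lemma small_bound (α : ℝ) (hα : 0 < α) (p : ℕ) (hp : 2 / α ≤ p) (X : ℝ) (hX : 1 ≤ X) (m ρ : ℝ)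
    (hm : m ≤ (4 * Real.exp 1 * (4 * Real.exp 1 * (p + 1).factorial))⁻¹ * X ^ (1 / α))
    (hM : TT (fun _ => 1) (fun j => (aN α j : ℝ)) (1 / X) ρ = m) :
    TT (fun j => (aN α j : ℝ)) (fun j => (aN α j : ℝ)) (1 / X) ρ ≤ X * X ^ (1 / α) := by
  have hX0 : 0 < X := by linarith
  have hr : 0 < 1 / X := by positivity
  set Y := X ^ (1 / α) with hY
  have hY1 : 1 ≤ Y := Real.one_le_rpow hX (by positivity)
  set C : ℝ := 4 * Real.exp 1 * (p + 1).factorial with hC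
  have hfac : (1:ℝ) ≤ (p + 1).factorial := by exact_mod_cast Nat.one_le_iff_ne_zero.2 (Nat.factorial_ne_zero _)
  have he : (1:ℝ) ≤ Real.exp 1 := Real.one_le_exp zero_le_one
  have hC1 : 1 ≤ C := by rw [hC]; nlinarith
  have h1 := aN_one_le α hα
  have hs := aN_summable α hα
  have hsm := TT_summable (w := fun _ => 1) (fun j => ⟨zero_le_one, h1 j⟩) hs hr ρ
  have hsn := TT_summable (w := fun j => (aN α j : ℝ)) (fun j => ⟨zero_le_one.trans (h1 j), le_rfl⟩) hs hr ρ
  set L := ⌊Y⌋₊ with hL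
  have hL2 : Y / 2 ≤ L := by
    have a1 : (1:ℝ) ≤ L := by exact_mod_cast Nat.le_floor (by simpa using hY1)
    have a2 := Nat.lt_floor_add_one Y
    rw [← hL] at a2
    linarith
  have hq : L * (Real.exp (-1) * fd (-ρ)) ≤ m := by
    rw [← hM]
    have hsum := hsm.sum_le_tsum (Finset.range L)
      (fun j _ => mul_nonneg zero_le_one (fd_pos _).le)
    refine le_trans ?_ hsum
    rw [← nsmul_eq_mul, ← Finset.card_range L, ← Finset.sum_const, Finset.card_range]
    apply Finset.sum_le_sum
    intro j hj
    have hjA : (aN α j : ℝ) ≤ X := by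
      refine (Nat.floor_le (by positivity)).trans ?_
      have hjY : ((j + 1 : ℕ) : ℝ) ≤ Y :=
        (Nat.le_floor_iff (by positivity)).1 (Finset.mem_range.1 hj)
      have := Real.rpow_le_rpow (by positivity) hjY hα.le
      rwa [hY, ← Real.rpow_mul hX0.le, one_div_mul_cancel hα.ne', Real.rpow_one] at this
    have h := fd_lower ((aN α j : ℝ) * (1/X)) (-ρ) (by positivity)
    have : (aN α j : ℝ) * (1/X) ≤ 1 := by rw [mul_one_div, div_le_one hX0]; exact hjA
    have h' : Real.exp (-1) ≤ Real.exp (-((aN α j : ℝ) * (1/X))) := Real.exp_le_exp.2 (by linarith)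
    have := mul_le_mul_of_nonneg_right h' (fd_pos (-ρ)).le
    rw [one_mul, sub_eq_add_neg]
    linarith
  have hf : fd (-ρ) ≤ (2 * C)⁻¹ := by
    have b1 : Y / 2 * (Real.exp (-1) * fd (-ρ)) ≤ (4 * Real.exp 1 * C)⁻¹ * Y :=
      (mul_le_mul_of_nonneg_right hL2 (mul_nonneg (Real.exp_pos _).le (fd_pos _).le)).trans (hq.trans hm)
    have b2 : Y / 2 * (Real.exp (-1) * fd (-ρ)) = (fd (-ρ)) * (Y / (2 * Real.exp 1)) := by
      rw [Real.exp_neg]; field_simp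
    have b3 : (4 * Real.exp 1 * C)⁻¹ * Y = (2 * C)⁻¹ * (Y / (2 * Real.exp 1)) := by
      field_simp; norm_num
    rw [b2, b3] at b1
    exact le_of_mul_le_mul_right b1 (by positivity)
  have hρ : Real.exp ρ ≤ C⁻¹ := by
    unfold fd at hf
    have := (inv_le_inv₀ (by positivity) (by positivity)).1 hf
    have h2 : C ≤ Real.exp (-ρ) := by linarith
    rw [Real.exp_neg] at h2
    exact (le_inv_comm₀ (by positivity) (by positivity)).1 h2
  obtain ⟨q1, q2⟩ := sum_bound α hα p hp X hX
  calc TT (fun j => (aN α j : ℝ)) (fun j => (aN α j : ℝ)) (1 / X) ρ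
      ≤ ∑' j, Real.exp ρ * ((aN α j : ℝ) * Real.exp (-((aN α j : ℝ) * (1 / X)))) :=
        Summable.tsum_le_tsum (fun j => TT_bound (w := fun j => (aN α j : ℝ)) (a := fun j => (aN α j : ℝ))
          (fun j => ⟨zero_le_one.trans (h1 j), le_rfl⟩) le_rfl le_rfl j) hsn (q1.mul_left _)
    _ = Real.exp ρ * ∑' j, ((aN α j : ℝ) * Real.exp (-((aN α j : ℝ) * (1 / X)))) := tsum_mul_left
    _ ≤ C⁻¹ * (C * X * Y) := mul_le_mul hρ q2 (tsum_nonneg fun j => by positivity) (by positivity)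
    _ = X * Y := by field_simp

/-- Proposition (unique saddle point): there is a constant `M₀ > 0` depending only on `β`
such that for each `m, n` with `1 ≤ m ≤ (M₀−ε) n^{β/(β+1)}` (and `n` large) the system
`n = ∑_{k≥1} k g(k)/(e^{kr−ρ}+1)`, `m = ∑_{k≥1} g(k)/(e^{kr−ρ}+1)` has a unique solution
`(r,ρ) ∈ ℝ₊* × ℝ`. -/
theorem saddle_point_unique (α β : ℝ) (hα : 0 < α ∧ α < 1) (hβ : β = 1 / α) :
    ∃ M₀ > (0:ℝ), ∀ ε : ℝ, 0 < ε → ε < M₀ → ∃ n₀ : ℕ, ∀ n : ℕ, n₀ ≤ n →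
      ∀ m : ℕ, 1 ≤ m → (m : ℝ) ≤ (M₀ - ε) * (n : ℝ) ^ (β / (β + 1)) →
      ∃! p : ℝ × ℝ, 0 < p.1 ∧
        (n : ℝ) = (∑' k : ℕ, (k : ℝ) * g α k / (Real.exp (k * p.1 - p.2) + 1)) ∧
        (m : ℝ) = (∑' k : ℕ, (g α k : ℝ) / (Real.exp (k * p.1 - p.2) + 1)) := by
  obtain ⟨hα0, hα1⟩ := hα
  obtain ⟨p, hp⟩ := exists_nat_ge (2 / α)
  refine ⟨(4 * Real.exp 1 * (4 * Real.exp 1 * (p + 1).factorial))⁻¹, by positivity, ?_⟩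
  intro ε hε _
  refine ⟨1, ?_⟩
  intro n hn m hm hmn
  have hn1 : (1:ℝ) ≤ n := by exact_mod_cast hn
  have hβ0 : 0 < β := by rw [hβ]; positivity
  set X : ℝ := (n : ℝ) ^ (1 / (β + 1)) with hX
  have hX1 : 1 ≤ X := Real.one_le_rpow hn1 (by positivity)
  have hXY : X ^ (1 / α) = (n : ℝ) ^ (β / (β + 1)) := by
    rw [hX, ← hβ, ← Real.rpow_mul (by positivity)]
    congr 1
    field_simp
  have hXn : X * X ^ (1 / α) = n := by
    rw [hXY, hX, ← Real.rpow_add (by positivity)]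
    have : 1 / (β + 1) + β / (β + 1) = 1 := by field_simp; ring
    rw [this, Real.rpow_one]
  have hm' : (m : ℝ) ≤ (4 * Real.exp 1 * (4 * Real.exp 1 * (p + 1).factorial))⁻¹ * X ^ (1 / α) := by
    rw [hXY]
    refine hmn.trans ?_
    gcongr
    linarith
  have h1 := aN_one_le α hα0
  have hs := aN_summable α hα0
  have main := exists_unique_abs h1 hs (aN_tendsto α hα0) n m (by exact_mod_cast hm) (by linarith)
    ⟨1 / X, by positivity, fun ρ hρ => by
      rw [← hXn]; exact small_bound α hα0 p hp X hX1 m ρ hm' hρ⟩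
  have conv : ∀ q : ℝ × ℝ, (0 < q.1 ∧
        (n : ℝ) = (∑' k : ℕ, (k : ℝ) * g α k / (Real.exp (k * q.1 - q.2) + 1)) ∧
        (m : ℝ) = (∑' k : ℕ, (g α k : ℝ) / (Real.exp (k * q.1 - q.2) + 1))) ↔
      (0 < q.1 ∧ (n : ℝ) = TT (fun j => (aN α j : ℝ)) (fun j => (aN α j : ℝ)) q.1 q.2 ∧
        (m : ℝ) = TT (fun _ => 1) (fun j => (aN α j : ℝ)) q.1 q.2) := by
    intro q
    apply and_congr_right
    intro hq
    have e1 : (∑' k : ℕ, (k : ℝ) * g α k / (Real.exp (k * q.1 - q.2) + 1)) =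
        TT (fun j => (aN α j : ℝ)) (fun j => (aN α j : ℝ)) q.1 q.2 := by
      have := tsum_reindex α (fun k => (k : ℝ) * fd (k * q.1 - q.2))
        (TT_summable (w := fun j => (aN α j : ℝ)) (fun j => ⟨zero_le_one.trans (h1 j), le_rfl⟩) hs hq q.2)
      unfold TT
      rw [← this]
      refine tsum_congr fun k => ?_
      unfold fd
      ring
    have e2 : (∑' k : ℕ, (g α k : ℝ) / (Real.exp (k * q.1 - q.2) + 1)) =
        TT (fun _ => 1) (fun j => (aN α j : ℝ)) q.1 q.2 := by
      have := tsum_reindex α (fun k => 1 * fd (k * q.1 - q.2))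
        (TT_summable (w := fun _ => 1) (fun j => ⟨zero_le_one, h1 j⟩) hs hq q.2)
      unfold TT
      rw [← this]
      refine tsum_congr fun k => ?_
      unfold fd
      ring
    rw [e1, e2]
  exact (existsUnique_congr conv).2 main
end

section
/- Let 0<α<1 and β:=1/α. There exist constants c>0 and r₀>0 depending only on α such that for all 0<r<r₀, all ρ∈ℝ, and all reals t,θ with r^{1+3β/7} < |t| ≤ π and |θ| ≤ π, one has |Q(e^{−(r+it)}, e^{ρ+iθ})| / Q(e^{−r}, e^ρ) ≤ exp(−c·(e^ρ/(1+e^ρ)²)·r^{−β/7}). -/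
open Real Complex

/-- `Q(z,u) = ∏_{k≥1} (1 + u z^k)^{g(k)}` -/
noncomputable def Q (α : ℝ) (z u : ℂ) : ℂ :=
  ∏' k : ℕ, (1 + u * z ^ (k + 1)) ^ g α (k + 1)

lemma g_eq_s13 (α β : ℝ) (hα : 0 < α ∧ α < 1) (hβ : β = 1 / α) (k : ℕ) (hk : 1 ≤ k) :
    g α k = ⌈((k : ℝ) + 1) ^ β⌉₊ - ⌈(k : ℝ) ^ β⌉₊ := by
  have hβ0 : 0 < β := by rw [hβ]; exact one_div_pos.mpr hα.1
  have hinv : α⁻¹ = β := by rw [hβ, one_div]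
  have hs : {n : ℕ | 1 ≤ n ∧ ⌊(n : ℝ) ^ α⌋ = (k : ℤ)} =
      ((Finset.Ico ⌈(k : ℝ) ^ β⌉₊ ⌈((k : ℝ) + 1) ^ β⌉₊ : Finset ℕ) : Set ℕ) := by
    ext n
    have hk0 : (0 : ℝ) < k := by exact_mod_cast hk
    have h1 : (k : ℝ) ≤ (n : ℝ) ^ α ↔ (k : ℝ) ^ β ≤ n := by
      rw [← hinv]
      exact (Real.rpow_inv_le_iff_of_pos hk0.le (Nat.cast_nonneg n) hα.1).symm
    have h2 : (n : ℝ) ^ α < (k : ℝ) + 1 ↔ (n : ℝ) < ((k : ℝ) + 1) ^ β := by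
      rw [← hinv]
      exact (Real.lt_rpow_inv_iff_of_pos (Nat.cast_nonneg n) (by positivity) hα.1).symm
    simp only [Set.mem_ofPred_eq, Finset.coe_Ico, Set.mem_Ico, Nat.ceil_le, Nat.lt_ceil,
      Int.floor_eq_iff, Int.cast_natCast, h1, h2]
    constructor
    · exact fun h => h.2
    · intro h
      refine ⟨?_, h⟩
      have : (0 : ℝ) < n := lt_of_lt_of_le (Real.rpow_pos_of_pos hk0 β) h.1
      exact_mod_cast this
  rw [g, hs, Set.ncard_coe_finset, Nat.card_Ico]

lemma g_lower (α β : ℝ) (hα : 0 < α ∧ α < 1) (hβ : β = 1 / α) (k : ℕ) (hk : 1 ≤ k) :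
    (k : ℝ) ^ (β - 1) / 2 ≤ g α k := by
  have hβ1 : 1 < β := by rw [hβ]; exact (one_lt_div hα.1).mpr hα.2
  have hk1 : (1 : ℝ) ≤ k := by exact_mod_cast hk
  have hk0 : (0 : ℝ) < k := by linarith
  have hD : (k : ℝ) ^ (β - 1) ≤ ((k : ℝ) + 1) ^ β - (k : ℝ) ^ β := by
    have hb := one_add_mul_self_le_rpow_one_add (s := 1 / (k : ℝ))
      (by have : 0 < 1 / (k : ℝ) := by positivity
          linarith) hβ1.le
    have e1 : ((k : ℝ) + 1) ^ β = (k : ℝ) ^ β * (1 + 1 / (k : ℝ)) ^ β := by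
      rw [← Real.mul_rpow hk0.le (by positivity)]
      congr 1; field_simp
    have e2 : (k : ℝ) ^ β = (k : ℝ) ^ (β - 1) * k := by
      rw [Real.rpow_sub_one hk0.ne']; field_simp
    have hp : 0 < (k : ℝ) ^ (β - 1) := Real.rpow_pos_of_pos hk0 _
    have : (k : ℝ) ^ β * (1 + β * (1 / (k : ℝ))) ≤ ((k : ℝ) + 1) ^ β := by
      rw [e1]; exact mul_le_mul_of_nonneg_left hb (by positivity)
    have e3 : (k : ℝ) ^ β * (1 + β * (1 / (k : ℝ))) = (k : ℝ) ^ β + β * (k : ℝ) ^ (β - 1) := by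
      rw [e2]; field_simp
    rw [e3] at this
    nlinarith
  have h1 : (1 : ℝ) ≤ (k : ℝ) ^ (β - 1) := Real.one_le_rpow hk1 (by linarith)
  have hle : ⌈(k : ℝ) ^ β⌉₊ ≤ ⌈((k : ℝ) + 1) ^ β⌉₊ := Nat.ceil_mono (by linarith)
  have hg : (g α k : ℝ) = (⌈((k : ℝ) + 1) ^ β⌉₊ : ℝ) - ⌈(k : ℝ) ^ β⌉₊ := by
    rw [g_eq_s13 α β hα hβ k hk, Nat.cast_sub hle]
  have c1 := Nat.le_ceil (((k : ℝ) + 1) ^ β)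
  have c2 := Nat.ceil_lt_add_one (a := (k : ℝ) ^ β) (by positivity)
  have hpos : (0 : ℝ) < g α k := by linarith
  have hg1 : (1 : ℝ) ≤ g α k := by exact_mod_cast hpos
  linarith

lemma g_upper (α β : ℝ) (hα : 0 < α ∧ α < 1) (hβ : β = 1 / α) (k : ℕ) (hk : 1 ≤ k) :
    (g α k : ℝ) ≤ ((k : ℝ) + 1) ^ (⌈β⌉₊) + 1 := by
  have hk1 : (1 : ℝ) ≤ k := by exact_mod_cast hk
  have c1 := Nat.ceil_lt_add_one (a := ((k : ℝ) + 1) ^ β) (by positivity)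
  have : ((k : ℝ) + 1) ^ β ≤ ((k : ℝ) + 1) ^ (⌈β⌉₊) := by
    rw [← Real.rpow_natCast]
    exact Real.rpow_le_rpow_of_exponent_le (by linarith) (Nat.le_ceil β)
  have h3 : (g α k : ℝ) ≤ ⌈((k : ℝ) + 1) ^ β⌉₊ := by
    rw [g_eq_s13 α β hα hβ k hk]; exact_mod_cast Nat.sub_le _ _
  linarith

lemma summ (α β : ℝ) (hα : 0 < α ∧ α < 1) (hβ : β = 1 / α) (q : ℝ) (h0 : 0 < q) (h1 : q < 1) :
    Summable (fun k : ℕ => (g α (k + 1) : ℝ) * q ^ (k + 1)) := by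
  have hq : ‖q‖ < 1 := by rw [Real.norm_of_nonneg h0.le]; exact h1
  have s1 : Summable (fun k : ℕ => ((k + 2 : ℕ) : ℝ) ^ ⌈β⌉₊ * q ^ (k + 2)) :=
    (summable_nat_add_iff (f := fun k : ℕ => (k : ℝ) ^ ⌈β⌉₊ * q ^ k) 2).mpr
      (summable_pow_mul_geometric_of_norm_lt_one ⌈β⌉₊ hq)
  have s2 : Summable (fun k : ℕ => q ^ (k + 1)) :=
    (summable_nat_add_iff (f := fun k : ℕ => q ^ k) 1).mpr (summable_geometric_of_norm_lt_one hq)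
  refine Summable.of_nonneg_of_le (fun k => by positivity) (fun k => ?_) ((s1.mul_left q⁻¹).add s2)
  have hu := g_upper α β hα hβ (k + 1) (by omega)
  generalize ⌈β⌉₊ = N at *
  have := mul_le_mul_of_nonneg_right hu (show 0 ≤ q ^ (k + 1) by positivity)
  refine this.trans (le_of_eq ?_)
  have e1 : q⁻¹ * (((k + 2 : ℕ) : ℝ) ^ N * q ^ (k + 2)) = ((k + 2 : ℕ) : ℝ) ^ N * q ^ (k + 1) := by
    rw [pow_succ q (k + 1)]; field_simp
  rw [e1]
  have e2 : (((k + 1 : ℕ) : ℝ) + 1) = ((k + 2 : ℕ) : ℝ) := by push_cast; ring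
  rw [e2]; ring

lemma mult (α β : ℝ) (hα : 0 < α ∧ α < 1) (hβ : β = 1 / α) (z u : ℂ) (h0 : 0 < ‖z‖)
    (h1 : ‖z‖ < 1) :
    Multipliable (fun k : ℕ => (1 + u * z ^ (k + 1)) ^ g α (k + 1)) := by
  have hs := (summ α β hα hβ ‖z‖ h0 h1).mul_left ‖u‖
  set a : ℕ → ℝ := fun k => ‖u‖ * ((g α (k + 1) : ℝ) * ‖z‖ ^ (k + 1)) with ha
  have ha0 : ∀ k, 0 ≤ a k := fun k => by positivity
  have key : Multipliable (fun k : ℕ => 1 + ((1 + u * z ^ (k + 1)) ^ g α (k + 1) - 1)) := by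
    apply multipliable_one_add_of_summable
    refine Summable.of_nonneg_of_le (fun k => norm_nonneg _) (fun k => ?_)
      (hs.mul_right (Real.exp (∑' k, a k)))
    have hb := Finset.norm_prod_one_add_sub_one_le (Finset.range (g α (k + 1)))
      (fun _ => u * z ^ (k + 1))
    simp only [Finset.prod_const, Finset.sum_const, Finset.card_range, nsmul_eq_mul, norm_mul,
      norm_pow] at hb
    have e : (g α (k + 1) : ℝ) * (‖u‖ * ‖z‖ ^ (k + 1)) = a k := by simp only [ha]; ring
    rw [e] at hb
    refine hb.trans ?_
    have hle : a k ≤ ∑' k, a k := hs.le_tsum k (fun j _ => ha0 j)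
    have h2 : Real.exp (a k) - 1 ≤ a k * Real.exp (a k) := by
      have h3 := Real.add_one_le_exp (-(a k))
      have h4 : Real.exp (-(a k)) * Real.exp (a k) = 1 := by rw [← Real.exp_add]; simp
      nlinarith [Real.exp_pos (a k)]
    exact h2.trans (mul_le_mul_of_nonneg_left (Real.exp_le_exp.mpr hle) (ha0 k))
  simpa using key

lemma factor (x ψ : ℝ) (hx : 0 < x) :
    ‖1 + (x : ℂ) * Complex.exp (ψ * Complex.I)‖ ≤
      (1 + x) * Real.exp (-(x / (1 + x) ^ 2 * (1 - Real.cos ψ))) := by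
  apply le_of_sq_le_sq _ (by positivity)
  rw [mul_pow, ← Real.exp_nat_mul]
  have e : ‖1 + (x : ℂ) * Complex.exp (ψ * Complex.I)‖ ^ 2 =
      (1 + x) ^ 2 * (1 - 2 * (x / (1 + x) ^ 2 * (1 - Real.cos ψ))) := by
    rw [← Complex.normSq_eq_norm_sq, Complex.normSq_apply]
    simp only [Complex.add_re, Complex.add_im, Complex.mul_re, Complex.mul_im,
      Complex.exp_ofReal_mul_I_re, Complex.exp_ofReal_mul_I_im, Complex.ofReal_re,
      Complex.ofReal_im, Complex.one_re, Complex.one_im]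
    field_simp
    nlinarith [Real.sin_sq_add_cos_sq ψ]
  rw [e]
  apply mul_le_mul_of_nonneg_left _ (by positivity)
  have := Real.add_one_le_exp (-(2 * (x / (1 + x) ^ 2 * (1 - Real.cos ψ))))
  push_cast
  rw [mul_neg]
  linarith

lemma weight (ρ s : ℝ) (h0 : 0 ≤ s) (h1 : s ≤ 1) :
    Real.exp (-1) * (Real.exp ρ / (1 + Real.exp ρ) ^ 2) ≤
      Real.exp (ρ - s) / (1 + Real.exp (ρ - s)) ^ 2 := by
  rw [← mul_div_assoc, ← Real.exp_add]
  apply div_le_div₀ (Real.exp_pos _).le (Real.exp_le_exp.mpr (by linarith))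
    (by positivity)
  have : Real.exp (ρ - s) ≤ Real.exp ρ := Real.exp_le_exp.mpr (by linarith)
  gcongr

lemma pair (a φ : ℝ) :
    Real.sin φ ^ 2 ≤ (1 - Real.cos a) + (1 - Real.cos (a - 2 * φ)) := by
  have e : Real.cos a + Real.cos (a - 2 * φ) = 2 * (Real.cos (a - φ) * Real.cos φ) := by
    have h1 := Real.cos_add (a - φ) φ
    have h2 := Real.cos_sub (a - φ) φ
    rw [show a - φ + φ = a by ring] at h1
    rw [show a - φ - φ = a - 2 * φ by ring] at h2
    rw [h1, h2]; ring
  nlinarith [Real.sin_sq_add_cos_sq φ, Real.sin_sq_add_cos_sq (a - φ),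
    sq_nonneg (Real.cos (a - φ) - Real.cos φ), sq_nonneg (Real.sin (a - φ))]

lemma sin_bd (φ : ℝ) (h : |φ| ≤ π / 2) : (2 / π * |φ|) ^ 2 ≤ Real.sin φ ^ 2 := by
  have h1 := Real.mul_le_sin (abs_nonneg φ) h
  have h2 : Real.sin φ ^ 2 = Real.sin |φ| ^ 2 := by
    rcases abs_cases φ with ⟨h, _⟩ | ⟨h, _⟩ <;> rw [h]
    rw [Real.sin_neg]; ring
  rw [h2]
  have : 0 ≤ 2 / π * |φ| := by positivity
  gcongr

lemma cos_sum (β r t θ : ℝ) (hβ : 0 < β) (hr : 0 < r) (hr1 : r < 1 / 4)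
    (M : ℕ) (hM : 1 / (8 * r) ≤ M)
    (ht : r ^ (1 + 3 * β / 7) < |t|) (htπ : |t| ≤ π) :
    (M : ℝ) * ((r ^ (3 * β / 7)) ^ 2 / (64 * π ^ 2)) ≤
      2 * ∑ j ∈ Finset.Ico M (3 * M), (1 - Real.cos (θ - t * ((j : ℝ) + 1))) := by
  have hπ := Real.pi_pos
  have ht0 : 0 < |t| := lt_of_le_of_lt (by positivity) ht
  have hM0 : (0 : ℝ) < M := lt_of_lt_of_le (by positivity) hM
  have hMN : 1 ≤ M := by exact_mod_cast hM0
  set R := r ^ (3 * β / 7) with hR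
  have hR0 : 0 < R := by positivity
  have hR1 : R ≤ 1 := Real.rpow_le_one hr.le (by linarith) (by positivity)
  have htR : r * R < |t| := by
    rw [Real.rpow_add hr, Real.rpow_one] at ht; exact ht
  obtain ⟨m, hmM, hm1, hm2⟩ : ∃ m : ℕ, m ≤ M ∧ |t| * m ≤ π ∧ R / 8 ≤ |t| * m := by
    have hfl : |t| * (⌊π / |t|⌋₊ : ℝ) ≤ π := by
      have := Nat.floor_le (show 0 ≤ π / |t| by positivity)
      rw [le_div_iff₀ ht0] at this; linarith
    by_cases hc : ⌊π / |t|⌋₊ ≤ M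
    · refine ⟨⌊π / |t|⌋₊, hc, hfl, ?_⟩
      have h1 : 1 ≤ π / |t| := (one_le_div ht0).mpr htπ
      have h2 : (1 : ℝ) ≤ ⌊π / |t|⌋₊ := by
        exact_mod_cast (Nat.one_le_floor_iff _).mpr h1
      have h3 := Nat.lt_floor_add_one (π / |t|)
      rw [div_lt_iff₀ ht0] at h3
      nlinarith [Real.pi_gt_three]
    · push Not at hc
      refine ⟨M, le_rfl, ?_, ?_⟩
      · have : (M : ℝ) ≤ ⌊π / |t|⌋₊ := by exact_mod_cast hc.le
        exact (mul_le_mul_of_nonneg_left this ht0.le).trans hfl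
      · calc R / 8 = r * R * (1 / (8 * r)) := by field_simp
          _ ≤ |t| * M := mul_le_mul htR.le hM (by positivity) ht0.le
  have hpr : ∀ j : ℕ, R ^ 2 / (64 * π ^ 2) ≤ (1 - Real.cos (θ - t * ((j : ℝ) + 1))) +
      (1 - Real.cos (θ - t * (((j + m : ℕ) : ℝ) + 1))) := by
    intro j
    have h1 := pair (θ - t * ((j : ℝ) + 1)) (t * m / 2)
    have ha : |t * m / 2| = |t| * m / 2 := by
      rw [abs_div, abs_mul, Nat.abs_cast, abs_of_pos (two_pos : (0 : ℝ) < 2)]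
    have h2 := sin_bd (t * m / 2) (by rw [ha]; linarith)
    rw [ha] at h2
    have e : θ - t * ((j : ℝ) + 1) - 2 * (t * m / 2) = θ - t * (((j + m : ℕ) : ℝ) + 1) := by
      push_cast; ring
    rw [e] at h1
    refine le_trans ?_ (h2.trans h1)
    have e2 : R ^ 2 / (64 * π ^ 2) = (2 / π * ((R / 8) / 2)) ^ 2 := by field_simp; norm_num
    rw [e2]
    gcongr
  have hf : ∀ j : ℕ, 0 ≤ 1 - Real.cos (θ - t * ((j : ℝ) + 1)) := fun j => by
    linarith [Real.cos_le_one (θ - t * ((j : ℝ) + 1))]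
  have s1 : ∑ j ∈ Finset.Ico M (2 * M), (1 - Real.cos (θ - t * ((j : ℝ) + 1))) ≤
      ∑ j ∈ Finset.Ico M (3 * M), (1 - Real.cos (θ - t * ((j : ℝ) + 1))) :=
    Finset.sum_le_sum_of_subset_of_nonneg
      (Finset.Ico_subset_Ico le_rfl (by omega)) (fun j _ _ => hf j)
  have s2 : ∑ j ∈ Finset.Ico M (2 * M), (1 - Real.cos (θ - t * (((j + m : ℕ) : ℝ) + 1))) ≤
      ∑ j ∈ Finset.Ico M (3 * M), (1 - Real.cos (θ - t * ((j : ℝ) + 1))) := by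
    rw [← Finset.sum_image (s := Finset.Ico M (2 * M)) (g := fun j => j + m)
      (f := fun j : ℕ => 1 - Real.cos (θ - t * ((j : ℝ) + 1)))
      (fun a _ b _ h => Nat.add_right_cancel h)]
    apply Finset.sum_le_sum_of_subset_of_nonneg _ (fun j _ _ => hf j)
    intro j hj
    simp only [Finset.mem_image, Finset.mem_Ico] at hj ⊢
    omega
  have s3 := Finset.sum_le_sum (s := Finset.Ico M (2 * M)) (fun j _ => hpr j)
  rw [Finset.sum_add_distrib, Finset.sum_const, Nat.card_Ico, nsmul_eq_mul, show 2 * M - M = M by omega] at s3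
  linarith

/-- Lemma (estimate for large `|t|`): for `r` small, `r^{1+3β/7} < |t| ≤ π`, `|θ| ≤ π`,
`|Q(e^{−(r+it)}, e^{ρ+iθ})|/Q(e^{−r}, e^ρ) ≤ exp(−c·(e^ρ/(1+e^ρ)²)·r^{−β/7})`. -/
theorem Q_ratio_bound_large_t (α β : ℝ) (hα : 0 < α ∧ α < 1) (hβ : β = 1 / α) :
    ∃ c > (0:ℝ), ∃ r₀ > (0:ℝ), ∀ r : ℝ, 0 < r → r < r₀ → ∀ ρ t θ : ℝ,
      r ^ (1 + 3 * β / 7) < |t| → |t| ≤ π → |θ| ≤ π →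
      ‖Q α (Complex.exp (-(r : ℂ) - (t : ℂ) * Complex.I))
          (Complex.exp ((ρ : ℂ) + (θ : ℂ) * Complex.I))‖
        / ‖Q α (Complex.exp (-(r : ℂ))) (Complex.exp (ρ : ℂ))‖
      ≤ Real.exp (-c * (Real.exp ρ / (1 + Real.exp ρ) ^ 2) * r ^ (-β / 7)) := by
  have hα0 := hα.1
  have hβ1 : 1 < β := by rw [hβ]; exact (one_lt_div hα.1).mpr hα.2
  have hβ0 : 0 < β := by linarith
  have hπ := Real.pi_pos
  refine ⟨Real.exp (-1) * (1 / 8) ^ β / (256 * π ^ 2), by positivity, 1 / 4, by norm_num, ?_⟩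
  intro r hr hr1 ρ t θ ht htπ _
  set p := Real.exp ρ / (1 + Real.exp ρ) ^ 2 with hp
  have hp0 : 0 < p := by positivity
  -- the cut-off
  set M := ⌊1 / (4 * r)⌋₊ with hMdef
  have hM1 : (M : ℝ) ≤ 1 / (4 * r) := Nat.floor_le (by positivity)
  have hM : 1 / (8 * r) ≤ M := by
    have h1 : 1 ≤ 1 / (4 * r) := by rw [one_le_div (by positivity)]; linarith
    have h2 : (1 : ℝ) ≤ M := by exact_mod_cast (Nat.one_le_floor_iff _).mpr h1
    have h3 := Nat.lt_floor_add_one (1 / (4 * r))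
    have h4 : 1 / (4 * r) = 2 * (1 / (8 * r)) := by field_simp; norm_num
    rw [h4] at h3
    rw [← h4, ← hMdef, h4] at h3
    linarith
  have hM0 : (0 : ℝ) < M := lt_of_lt_of_le (by positivity) hM
  have hMN : 1 ≤ M := by exact_mod_cast hM0
  have hMr : (M : ℝ) * (4 * r) ≤ 1 := by rwa [le_div_iff₀ (by positivity)] at hM1
  -- the two families of factors
  set z := Complex.exp (-(r : ℂ) - (t : ℂ) * Complex.I) with hz
  set u := Complex.exp ((ρ : ℂ) + (θ : ℂ) * Complex.I) with hu
  set z' := Complex.exp (-(r : ℂ)) with hz'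
  set u' := Complex.exp (ρ : ℂ) with hu'
  have nz : ‖z‖ = Real.exp (-r) := by rw [hz, Complex.norm_exp]; simp
  have nz' : ‖z'‖ = Real.exp (-r) := by rw [hz', Complex.norm_exp]; simp
  have hlt : Real.exp (-r) < 1 := by rw [Real.exp_lt_one_iff]; linarith
  have m1 := mult α β hα hβ z u (by rw [nz]; positivity) (by rw [nz]; exact hlt)
  have m2 := mult α β hα hβ z' u' (by rw [nz']; positivity) (by rw [nz']; exact hlt)
  set x : ℕ → ℝ := fun k => Real.exp (ρ - r * ((k : ℝ) + 1)) with hx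
  have hx0 : ∀ k, 0 < x k := fun k => Real.exp_pos _
  have t1 : ∀ k : ℕ, u * z ^ (k + 1) =
      (x k : ℂ) * Complex.exp (((θ - t * ((k : ℝ) + 1) : ℝ) : ℂ) * Complex.I) := by
    intro k
    rw [hz, hu, ← Complex.exp_nat_mul, ← Complex.exp_add]
    simp only [hx]
    rw [Complex.ofReal_exp, ← Complex.exp_add]
    congr 1
    push_cast
    ring
  have t2 : ∀ k : ℕ, u' * z' ^ (k + 1) = (x k : ℂ) := by
    intro k
    rw [hz', hu', ← Complex.exp_nat_mul, ← Complex.exp_add]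
    simp only [hx]
    rw [Complex.ofReal_exp]
    congr 1
    push_cast
    ring
  have n2 : ∀ k : ℕ, ‖(1 + u' * z' ^ (k + 1)) ^ g α (k + 1)‖ = (1 + x k) ^ g α (k + 1) := by
    intro k
    have h := hx0 k
    rw [t2, norm_pow, ← Complex.ofReal_one, ← Complex.ofReal_add, Complex.norm_real,
      Real.norm_of_nonneg (by linarith)]
  set f : ℕ → ℝ := fun k => 1 - Real.cos (θ - t * ((k : ℝ) + 1)) with hf
  have hf0 : ∀ k, 0 ≤ f k := fun k => by
    simp only [hf]; linarith [Real.cos_le_one (θ - t * ((k : ℝ) + 1))]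
  set e : ℕ → ℝ := fun k => (g α (k + 1) : ℝ) * (x k / (1 + x k) ^ 2 * f k) with he
  have he0 : ∀ k, 0 ≤ e k := fun k => by
    have := hx0 k
    have := hf0 k
    simp only [he]; positivity
  have n1 : ∀ k : ℕ, ‖(1 + u * z ^ (k + 1)) ^ g α (k + 1)‖ ≤
      (1 + x k) ^ g α (k + 1) * Real.exp (-(e k)) := by
    intro k
    rw [t1, norm_pow]
    refine (pow_le_pow_left₀ (norm_nonneg _) (factor (x k) _ (hx0 k)) _).trans (le_of_eq ?_)
    rw [mul_pow, ← Real.exp_nat_mul]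
    simp only [he, hf]
    ring_nf
  -- lower bound for the exponent
  have hE : Real.exp (-1) * (1 / 8) ^ β / (256 * π ^ 2) * p * r ^ (-β / 7) ≤
      ∑ k ∈ Finset.Ico M (3 * M), e k := by
    have hterm : ∀ k ∈ Finset.Ico M (3 * M),
        ((M : ℝ) ^ (β - 1) / 2 * (Real.exp (-1) * p)) * f k ≤ e k := by
      intro k hk
      rw [Finset.mem_Ico] at hk
      have hk1 : (M : ℝ) ≤ k := by exact_mod_cast hk.1
      have hk2 : (k : ℝ) + 1 ≤ 4 * M := by
        have : k + 1 ≤ 4 * M := by omega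
        exact_mod_cast this
      have h1 := g_lower α β hα hβ (k + 1) (by omega)
      have h2 : (M : ℝ) ^ (β - 1) ≤ ((k + 1 : ℕ) : ℝ) ^ (β - 1) :=
        Real.rpow_le_rpow hM0.le (by push_cast; linarith) (by linarith)
      have h3 := weight ρ (r * ((k : ℝ) + 1)) (by positivity) (by nlinarith)
      simp only [he]
      rw [mul_assoc]
      exact mul_le_mul (by linarith) (mul_le_mul_of_nonneg_right h3 (hf0 k))
        (mul_nonneg (by positivity) (hf0 k)) (by positivity)
    refine le_trans ?_ (Finset.sum_le_sum hterm)
    rw [← Finset.mul_sum]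
    have hc := cos_sum β r t θ hβ0 hr hr1 M hM ht htπ
    have hc' : (M : ℝ) / 2 * ((r ^ (3 * β / 7)) ^ 2 / (64 * π ^ 2)) ≤
        ∑ k ∈ Finset.Ico M (3 * M), f k := by simp only [hf]; linarith
    refine le_trans ?_ (mul_le_mul_of_nonneg_left hc' (by positivity))
    have hMβ : (M : ℝ) ^ (β - 1) * M = (M : ℝ) ^ β := by
      rw [Real.rpow_sub_one hM0.ne']; field_simp
    have hMβ' : (1 / 8) ^ β * r ^ (-β) ≤ (M : ℝ) ^ β := by
      have : (1 / 8 : ℝ) ^ β * r ^ (-β) = (1 / (8 * r)) ^ β := by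
        rw [Real.rpow_neg hr.le, ← Real.inv_rpow hr.le, ← Real.mul_rpow (by norm_num) (by positivity)]
        congr 1; field_simp
      rw [this]
      exact Real.rpow_le_rpow (by positivity) hM hβ0.le
    have hrr : r ^ (-β / 7) = r ^ (-β) * (r ^ (3 * β / 7)) ^ 2 := by
      rw [← Real.rpow_natCast, ← Real.rpow_mul hr.le, ← Real.rpow_add hr]
      congr 1; push_cast; ring
    rw [hrr]
    calc Real.exp (-1) * (1 / 8) ^ β / (256 * π ^ 2) * p * (r ^ (-β) * (r ^ (3 * β / 7)) ^ 2)
        = ((1 / 8) ^ β * r ^ (-β)) *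
          (Real.exp (-1) * p * (r ^ (3 * β / 7)) ^ 2 / (256 * π ^ 2)) := by ring
      _ ≤ (M : ℝ) ^ β * (Real.exp (-1) * p * (r ^ (3 * β / 7)) ^ 2 / (256 * π ^ 2)) :=
          mul_le_mul_of_nonneg_right hMβ' (by positivity)
      _ = _ := by rw [← hMβ]; ring
  -- pass to the limit
  have T1 := m1.tendsto_prod_tprod_nat.norm
  have T2 := m2.tendsto_prod_tprod_nat.norm
  have hQ1 : 1 ≤ ‖Q α z' u'‖ := by
    refine ge_of_tendsto' T2 (fun N => ?_)
    rw [norm_prod, Finset.prod_congr rfl (fun k _ => n2 k)]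
    have : ∏ k ∈ Finset.range N, (1 : ℝ) ≤ ∏ k ∈ Finset.range N, (1 + x k) ^ g α (k + 1) :=
      Finset.prod_le_prod (fun _ _ => zero_le_one)
        (fun k _ => one_le_pow₀ (by linarith [hx0 k]))
    simpa using this
  rw [div_le_iff₀ (by linarith)]
  refine le_of_tendsto_of_tendsto T1 (T2.const_mul _) ?_
  filter_upwards [Filter.eventually_ge_atTop (3 * M)] with N hN
  rw [norm_prod, norm_prod]
  refine (Finset.prod_le_prod (fun k _ => norm_nonneg _) (fun k _ => n1 k)).trans ?_
  rw [Finset.prod_mul_distrib, ← Real.exp_sum, mul_comm, Finset.prod_congr rfl (fun k _ => n2 k)]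
  apply mul_le_mul_of_nonneg_right _
    (Finset.prod_nonneg fun k _ => by have := hx0 k; positivity)
  apply Real.exp_le_exp.mpr
  rw [Finset.sum_neg_distrib]
  have : ∑ k ∈ Finset.Ico M (3 * M), e k ≤ ∑ k ∈ Finset.range N, e k := by
    apply Finset.sum_le_sum_of_subset_of_nonneg _ (fun k _ _ => he0 k)
    intro k hk
    rw [Finset.mem_Ico] at hk
    rw [Finset.mem_range]
    omega
  linarith
end

section
/- Let 0<α<1 and β:=1/α. There exist constants c₇>0 and r₀>0 depending only on β such that for all 0<r<r₀, all ρ∈ℝ, and all reals t,θ with |t| ≤ r^{1+3β/7} and r^{3β/7} < |θ| ≤ π, one has |Q(e^{−(r+it)}, e^{ρ+iθ})| / Q(e^{−r}, e^ρ) ≤ exp(−c₇·(e^ρ/(1+e^ρ)²)·r^{−β/7}). -/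
open Real

lemma g_set_subset (α : ℝ) (hα : 0 < α) (k : ℕ) :
    {n : ℕ | 1 ≤ n ∧ ⌊(n : ℝ) ^ α⌋ = (k : ℤ)} ⊆
      ((Finset.range (⌊((k : ℝ) + 1) ^ (1 / α)⌋₊ + 1) : Finset ℕ) : Set ℕ) := by
  intro n hn
  obtain ⟨h1, h2⟩ := hn
  have h3 : (n : ℝ) ^ α < (k : ℝ) + 1 := by
    have := Int.lt_floor_add_one ((n : ℝ) ^ α)
    rw [h2] at this
    exact_mod_cast this
  have h4 : (n : ℝ) ≤ ((k : ℝ) + 1) ^ (1 / α) := by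
    have h5 : ((n : ℝ) ^ α) ^ (1 / α) ≤ ((k : ℝ) + 1) ^ (1 / α) :=
      Real.rpow_le_rpow (by positivity) h3.le (by positivity)
    rwa [← Real.rpow_mul (by positivity), mul_one_div_cancel hα.ne', Real.rpow_one] at h5
  simp only [Finset.coe_range, Set.mem_Iio]
  exact Nat.lt_succ_of_le (Nat.le_floor h4)

lemma g_finite (α : ℝ) (hα : 0 < α) (k : ℕ) :
    {n : ℕ | 1 ≤ n ∧ ⌊(n : ℝ) ^ α⌋ = (k : ℤ)}.Finite :=
  (Finset.finite_toSet _).subset (g_set_subset α hα k)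

lemma g_le (α : ℝ) (hα : 0 < α) (k : ℕ) :
    (g α (k + 1) : ℝ) ≤ 2 * 2 ^ ⌈1 / α⌉₊ * ((k + 1 : ℕ) : ℝ) ^ ⌈1 / α⌉₊ := by
  have h1 : g α (k + 1) ≤ ⌊(((k + 1 : ℕ) : ℝ) + 1) ^ (1 / α)⌋₊ + 1 := by
    have := Set.ncard_le_ncard (g_set_subset α hα (k + 1)) (Finset.finite_toSet _)
    rwa [Set.ncard_coe_finset, Finset.card_range] at this
  have h2 : (g α (k + 1) : ℝ) ≤ (((k + 1 : ℕ) : ℝ) + 1) ^ (1 / α) + 1 := by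
    have h3 : (g α (k + 1) : ℝ) ≤ (⌊(((k + 1 : ℕ) : ℝ) + 1) ^ (1 / α)⌋₊ : ℝ) + 1 := by
      exact_mod_cast h1
    have := Nat.floor_le (show 0 ≤ (((k + 1 : ℕ) : ℝ) + 1) ^ (1 / α) by positivity)
    linarith
  have hk : (1 : ℝ) ≤ ((k + 1 : ℕ) : ℝ) := by push_cast; linarith [(Nat.cast_nonneg k : (0:ℝ) ≤ k)]
  have h4 : (((k + 1 : ℕ) : ℝ) + 1) ^ (1 / α) ≤ (((k + 1 : ℕ) : ℝ) + 1) ^ ⌈1 / α⌉₊ := by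
    rw [← Real.rpow_natCast]
    exact Real.rpow_le_rpow_of_exponent_le (by linarith) (Nat.le_ceil _)
  have h5 : (((k + 1 : ℕ) : ℝ) + 1) ^ ⌈1 / α⌉₊ ≤ (2 * ((k + 1 : ℕ) : ℝ)) ^ ⌈1 / α⌉₊ :=
    pow_le_pow_left₀ (by linarith) (by linarith) _
  have h6 : (1 : ℝ) ≤ (((k + 1 : ℕ) : ℝ) + 1) ^ ⌈1 / α⌉₊ := one_le_pow₀ (by linarith)
  rw [mul_assoc, ← mul_pow]
  linarith

lemma Q_multipliable (α : ℝ) (hα : 0 < α) (z u : ℂ) (hz : ‖z‖ < 1) :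
    Multipliable fun k : ℕ => (1 + u * z ^ (k + 1)) ^ g α (k + 1) := by
  have hs : Summable fun k : ℕ => (g α (k + 1) : ℝ) * ‖u * z ^ (k + 1)‖ := by
    have h0 : Summable fun k : ℕ => ((k : ℕ) : ℝ) ^ ⌈1 / α⌉₊ * ‖z‖ ^ k :=
      summable_pow_mul_geometric_of_norm_lt_one _ (by simpa using hz)
    have h1 := ((summable_nat_add_iff 1).2 h0).mul_left (2 * 2 ^ ⌈1 / α⌉₊ * ‖u‖)
    refine Summable.of_nonneg_of_le (fun k => by positivity) (fun k => ?_) h1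
    rw [norm_mul, norm_pow]
    calc (g α (k + 1) : ℝ) * (‖u‖ * ‖z‖ ^ (k + 1))
        ≤ (2 * 2 ^ ⌈1 / α⌉₊ * ((k + 1 : ℕ) : ℝ) ^ ⌈1 / α⌉₊) * (‖u‖ * ‖z‖ ^ (k + 1)) :=
          mul_le_mul_of_nonneg_right (g_le α hα k) (by positivity)
      _ = _ := by ring
  have hb : ∀ k : ℕ, ‖(1 + u * z ^ (k + 1)) ^ g α (k + 1) - 1‖ ≤
      Real.exp ((g α (k + 1) : ℝ) * ‖u * z ^ (k + 1)‖) - 1 := by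
    intro k
    have := Finset.norm_prod_one_add_sub_one_le (Finset.range (g α (k + 1)))
      (fun _ => u * z ^ (k + 1))
    simpa using this
  have hsum : Summable fun k : ℕ => ‖(1 + u * z ^ (k + 1)) ^ g α (k + 1) - 1‖ := by
    refine summable_of_isBigO_nat hs (Asymptotics.IsBigO.of_bound 2 ?_)
    have hev := hs.tendsto_atTop_zero.eventually (ge_mem_nhds (show (0:ℝ) < 1 by norm_num))
    filter_upwards [hev] with k hk
    rw [norm_norm]
    refine (hb k).trans ?_
    have hnn : 0 ≤ (g α (k + 1) : ℝ) * ‖u * z ^ (k + 1)‖ := by positivity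
    have := Real.abs_exp_sub_one_le (x := (g α (k + 1) : ℝ) * ‖u * z ^ (k + 1)‖)
      (by rwa [abs_of_nonneg hnn])
    rw [Real.norm_eq_abs]
    exact (le_abs_self _).trans this
  have := multipliable_one_add_of_summable hsum
  simpa using this

lemma sum_g_ge (α : ℝ) (hα : 0 < α) (y : ℝ) (hy : 0 ≤ y) :
    ⌊y ^ (1 / α)⌋₊ ≤ ∑ k ∈ Finset.range ⌊y⌋₊, g α (k + 1) := by
  classical
  have hsub : Finset.Icc 1 ⌊y ^ (1 / α)⌋₊ ⊆
      (Finset.range ⌊y⌋₊).biUnion (fun k => (g_finite α hα (k + 1)).toFinset) := by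
    intro n hn
    rw [Finset.mem_Icc] at hn
    have hn1 : (1 : ℝ) ≤ n := by exact_mod_cast hn.1
    have h1 : (1 : ℝ) ≤ (n : ℝ) ^ α := Real.one_le_rpow hn1 hα.le
    have h2 : (n : ℝ) ^ α ≤ y := by
      have h3 : (n : ℝ) ≤ y ^ (1 / α) := (Nat.le_floor_iff (by positivity)).1 hn.2
      have h4 := Real.rpow_le_rpow (by positivity) h3 hα.le
      rwa [← Real.rpow_mul hy, one_div_mul_cancel hα.ne', Real.rpow_one] at h4
    have h5 : 1 ≤ ⌊(n : ℝ) ^ α⌋₊ := Nat.le_floor (by exact_mod_cast h1)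
    have h6 : ⌊(n : ℝ) ^ α⌋₊ ≤ ⌊y⌋₊ := Nat.floor_le_floor h2
    simp only [Finset.mem_biUnion, Finset.mem_range, Set.Finite.mem_toFinset, Set.mem_ofPred_eq]
    refine ⟨⌊(n : ℝ) ^ α⌋₊ - 1, by omega, hn.1, ?_⟩
    rw [Nat.sub_add_cancel h5, Int.natCast_floor_eq_floor (by positivity)]
  calc ⌊y ^ (1 / α)⌋₊ = (Finset.Icc 1 ⌊y ^ (1 / α)⌋₊).card := by simp
    _ ≤ _ := Finset.card_le_card hsub
    _ ≤ _ := Finset.card_biUnion_le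
    _ = _ := by
      refine Finset.sum_congr rfl fun k _ => ?_
      rw [← Set.ncard_eq_toFinset_card _ (g_finite α hα (k + 1))]
      rfl

lemma factor_eq (r ρ t θ : ℝ) (k : ℕ) :
    Complex.exp ((ρ : ℂ) + (θ : ℂ) * Complex.I) *
      Complex.exp (-(r : ℂ) - (t : ℂ) * Complex.I) ^ k =
    ((Real.exp (ρ - r * k) : ℝ) : ℂ) * Complex.exp (((θ - t * k : ℝ) : ℂ) * Complex.I) := by
  rw [← Complex.exp_nat_mul, Complex.ofReal_exp, ← Complex.exp_add, ← Complex.exp_add]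
  congr 1
  push_cast
  ring

lemma norm_factor (x φ d : ℝ) (hx : 0 < x) (hd : d ≤ x * (1 - Real.cos φ) / (1 + x) ^ 2) :
    ‖(1 : ℂ) + (x : ℂ) * Complex.exp ((φ : ℂ) * Complex.I)‖ ≤ (1 + x) * Real.exp (-d) := by
  refine le_of_sq_le_sq ?_ (by positivity)
  have h1 : ‖(1 : ℂ) + (x : ℂ) * Complex.exp ((φ : ℂ) * Complex.I)‖ ^ 2
      = (1 + x) ^ 2 * (1 - 2 * (x * (1 - Real.cos φ) / (1 + x) ^ 2)) := by
    rw [← Complex.normSq_eq_norm_sq, Complex.normSq_apply]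
    simp only [Complex.add_re, Complex.one_re, Complex.mul_re, Complex.ofReal_re,
      Complex.ofReal_im, Complex.add_im, Complex.one_im, Complex.mul_im,
      Complex.exp_ofReal_mul_I_re, Complex.exp_ofReal_mul_I_im]
    field_simp
    nlinarith [Real.sin_sq_add_cos_sq φ]
  rw [h1, mul_pow, ← Real.exp_nat_mul]
  refine mul_le_mul_of_nonneg_left ?_ (by positivity)
  have := Real.add_one_le_exp (((2 : ℕ) : ℝ) * -d)
  push_cast at this ⊢
  linarith

lemma one_sub_cos_ge (s θ φ : ℝ) (hs : 0 ≤ s) (hsθ : s ≤ |θ|) (hθ : |θ| ≤ π)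
    (hφ : |θ - φ| ≤ s / 2) : s ^ 2 / (2 * π ^ 2) ≤ 1 - Real.cos φ := by
  have hpi := Real.pi_pos
  have h1 : s / 2 ≤ |φ| := by
    have := abs_sub_abs_le_abs_sub θ φ
    linarith
  have h2 : |φ| ≤ 3 * π / 2 := by
    have := abs_sub_abs_le_abs_sub φ θ
    rw [abs_sub_comm] at this
    linarith
  rcases le_or_gt |φ| π with h | h
  · have h4 : Real.cos φ ≤ 1 - 2 / π ^ 2 * φ ^ 2 := Real.cos_le_one_sub_mul_cos_sq h
    have h5 : (s / 2) ^ 2 ≤ φ ^ 2 := by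
      rw [← sq_abs φ]; exact pow_le_pow_left₀ (by positivity) h1 2
    have h6 : 2 / π ^ 2 * (s / 2) ^ 2 ≤ 2 / π ^ 2 * φ ^ 2 :=
      mul_le_mul_of_nonneg_left h5 (by positivity)
    have h7 : s ^ 2 / (2 * π ^ 2) = 2 / π ^ 2 * (s / 2) ^ 2 := by field_simp
    linarith
  · have h3 : Real.cos |φ| ≤ 0 :=
      Real.cos_nonpos_of_pi_div_two_le_of_le (by linarith) (by linarith)
    rw [Real.cos_abs] at h3
    have h4 : s ^ 2 / (2 * π ^ 2) ≤ 1 := by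
      rw [div_le_one (by positivity)]
      nlinarith
    linarith

lemma density_ge (r ρ : ℝ) (k : ℕ) (hr : 0 < r) (hk : r * k ≤ 1) :
    Real.exp (-1) * (Real.exp ρ / (1 + Real.exp ρ) ^ 2) ≤
      Real.exp (ρ - r * k) / (1 + Real.exp (ρ - r * k)) ^ 2 := by
  have h0 : 0 ≤ r * k := by positivity
  have h1 : Real.exp (ρ - r * k) ≤ Real.exp ρ := Real.exp_le_exp.2 (by linarith)
  rw [← mul_div_assoc, ← Real.exp_add]
  refine div_le_div₀ (Real.exp_pos _).le (Real.exp_le_exp.2 (by linarith)) (by positivity) ?_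
  exact pow_le_pow_left₀ (by positivity) (by linarith) 2

lemma norm_Q_le (α : ℝ) (hα : 0 < α) (r ρ t θ s D : ℝ) (hr : 0 < r) (hs : 0 ≤ s)
    (ht : |t| ≤ r * s) (hsθ : s ≤ |θ|) (hθ : |θ| ≤ π)
    (hD : D = Real.exp (-1) * (Real.exp ρ / (1 + Real.exp ρ) ^ 2) * (s ^ 2 / (2 * π ^ 2))) :
    ‖Q α (Complex.exp (-(r : ℂ) - (t : ℂ) * Complex.I))
          (Complex.exp ((ρ : ℂ) + (θ : ℂ) * Complex.I))‖ ≤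
      Real.exp (-(D * ⌊(1 / (2 * r)) ^ (1 / α)⌋₊)) *
        ‖Q α (Complex.exp (-(r : ℂ))) (Complex.exp (ρ : ℂ))‖ := by
  have hD0 : 0 ≤ D := by rw [hD]; positivity
  have hz1 : ‖Complex.exp (-(r : ℂ) - (t : ℂ) * Complex.I)‖ < 1 := by
    rw [Complex.norm_exp]; simpa using hr
  have hz0 : ‖Complex.exp (-(r : ℂ))‖ < 1 := by
    rw [Complex.norm_exp]; simpa using hr
  have T1 := (Q_multipliable α hα _ (Complex.exp ((ρ : ℂ) + (θ : ℂ) * Complex.I))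
    hz1).hasProd.tendsto_prod_nat.norm
  have T0 := ((Q_multipliable α hα _ (Complex.exp (ρ : ℂ))
    hz0).hasProd.tendsto_prod_nat.norm).const_mul
      (Real.exp (-(D * ⌊(1 / (2 * r)) ^ (1 / α)⌋₊)))
  refine le_of_tendsto_of_tendsto T1 T0 ?_
  filter_upwards [Filter.eventually_ge_atTop ⌊1 / (2 * r)⌋₊] with N hN
  set K := ⌊1 / (2 * r)⌋₊ with hK
  set δ : ℕ → ℝ := fun k => if k < K then D else 0 with hδ
  have hfac0 : ∀ k : ℕ, ‖(1 : ℂ) + Complex.exp (ρ : ℂ) * Complex.exp (-(r : ℂ)) ^ k‖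
      = 1 + Real.exp (ρ - r * k) := by
    intro k
    have := factor_eq r ρ 0 0 k
    simp only [Complex.ofReal_zero, zero_mul, add_zero, sub_zero, Complex.exp_zero,
      mul_one] at this
    rw [this, ← Complex.ofReal_one, ← Complex.ofReal_add, Complex.norm_real, Real.norm_eq_abs,
      abs_of_pos (by positivity)]
  have hfac : ∀ k : ℕ, ‖(1 : ℂ) + Complex.exp ((ρ : ℂ) + (θ : ℂ) * Complex.I) *
      Complex.exp (-(r : ℂ) - (t : ℂ) * Complex.I) ^ (k + 1)‖ ≤
      (1 + Real.exp (ρ - r * (k + 1 : ℕ))) * Real.exp (-δ k) := by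
    intro k
    rw [factor_eq]
    refine norm_factor _ _ _ (Real.exp_pos _) ?_
    by_cases hk : k < K
    · simp only [hδ, hk, if_true]
      have hk2 : ((k + 1 : ℕ) : ℝ) ≤ 1 / (2 * r) :=
        (Nat.le_floor_iff (by positivity)).1 hk
      have hk3 : r * ((k + 1 : ℕ) : ℝ) ≤ 1 / 2 := by
        rw [le_div_iff₀ (by positivity)] at hk2
        linarith
      have hc := one_sub_cos_ge s θ (θ - t * (k + 1 : ℕ)) hs hsθ hθ (by
        rw [sub_sub_cancel, abs_mul, Nat.abs_cast]
        calc |t| * ((k + 1 : ℕ) : ℝ) ≤ r * s * ((k + 1 : ℕ) : ℝ) :=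
              mul_le_mul_of_nonneg_right ht (by positivity)
          _ = s * (r * ((k + 1 : ℕ) : ℝ)) := by ring
          _ ≤ s * (1 / 2) := mul_le_mul_of_nonneg_left hk3 hs
          _ = s / 2 := by ring)
      have hd := density_ge r ρ (k + 1) hr (by linarith)
      rw [hD, mul_div_right_comm]
      exact mul_le_mul hd hc (by positivity) (by positivity)
    · simp only [hδ, hk, if_false]
      have := Real.cos_le_one (θ - t * (k + 1 : ℕ))
      have h' : 0 ≤ 1 - Real.cos (θ - t * (k + 1 : ℕ)) := by linarith
      positivity
  rw [norm_prod, norm_prod]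
  simp only [norm_pow, hfac0]
  have hstep : ∏ k ∈ Finset.range N, ‖(1 : ℂ) + Complex.exp ((ρ : ℂ) + (θ : ℂ) * Complex.I) *
      Complex.exp (-(r : ℂ) - (t : ℂ) * Complex.I) ^ (k + 1)‖ ^ g α (k + 1) ≤
      ∏ k ∈ Finset.range N, (Real.exp (-(g α (k + 1) * δ k)) *
        (1 + Real.exp (ρ - r * (k + 1 : ℕ))) ^ g α (k + 1)) := by
    refine Finset.prod_le_prod (fun _ _ => by positivity) fun k _ => ?_
    refine (pow_le_pow_left₀ (norm_nonneg _) (hfac k) _).trans_eq ?_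
    rw [mul_pow, ← Real.exp_nat_mul, mul_comm]
    congr 2
    ring
  refine hstep.trans ?_
  rw [Finset.prod_mul_distrib, ← Real.exp_sum]
  refine mul_le_mul_of_nonneg_right ?_ (Finset.prod_nonneg fun _ _ => by positivity)
  rw [Real.exp_le_exp, Finset.sum_neg_distrib, neg_le_neg_iff]
  have h1 : (⌊(1 / (2 * r)) ^ (1 / α)⌋₊ : ℝ) ≤ ∑ k ∈ Finset.range K, (g α (k + 1) : ℝ) := by
    exact_mod_cast sum_g_ge α hα (1 / (2 * r)) (by positivity)
  calc D * (⌊(1 / (2 * r)) ^ (1 / α)⌋₊ : ℝ) ≤ D * ∑ k ∈ Finset.range K, (g α (k + 1) : ℝ) :=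
        mul_le_mul_of_nonneg_left h1 hD0
    _ = ∑ k ∈ Finset.range K, (g α (k + 1) : ℝ) * δ k := by
        rw [Finset.mul_sum]
        refine Finset.sum_congr rfl fun k hk => ?_
        simp only [hδ, Finset.mem_range.1 hk, if_true]
        ring
    _ ≤ ∑ k ∈ Finset.range N, (g α (k + 1) : ℝ) * δ k := by
        refine Finset.sum_le_sum_of_subset_of_nonneg (Finset.range_mono hN) fun k _ _ => ?_
        simp only [hδ]
        split_ifs <;> positivity

/-- Lemma (estimate for small `|t|`, large `|θ|`): for `r` small, `|t| ≤ r^{1+3β/7}`,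
`r^{3β/7} < |θ| ≤ π`, one has
`|Q(e^{−(r+it)}, e^{ρ+iθ})|/Q(e^{−r}, e^ρ) ≤ exp(−c₇·(e^ρ/(1+e^ρ)²)·r^{−β/7})`. -/
theorem Q_ratio_bound_small_t (α β : ℝ) (hα : 0 < α ∧ α < 1) (hβ : β = 1 / α) :
    ∃ c₇ > (0:ℝ), ∃ r₀ > (0:ℝ), ∀ r : ℝ, 0 < r → r < r₀ → ∀ ρ t θ : ℝ,
      |t| ≤ r ^ (1 + 3 * β / 7) → r ^ (3 * β / 7) < |θ| → |θ| ≤ π →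
      ‖Q α (Complex.exp (-(r : ℂ) - (t : ℂ) * Complex.I))
          (Complex.exp ((ρ : ℂ) + (θ : ℂ) * Complex.I))‖
        / ‖Q α (Complex.exp (-(r : ℂ))) (Complex.exp (ρ : ℂ))‖
      ≤ Real.exp (-c₇ * (Real.exp ρ / (1 + Real.exp ρ) ^ 2) * r ^ (-β / 7)) := by
  have hα0 := hα.1
  have hβ0 : 0 < β := by rw [hβ]; positivity
  refine ⟨Real.exp (-1) * (1 / (2 * π ^ 2)) * ((1 / 2) ^ β / 2), by positivity, 1 / 2,
    by norm_num, ?_⟩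
  intro r hr hr0 ρ t θ ht hθ1 hθ2
  have hs : 0 ≤ r ^ (3 * β / 7) := by positivity
  rw [Real.rpow_add hr, Real.rpow_one] at ht
  have hmain := norm_Q_le α hα0 r ρ t θ _ _ hr hs ht hθ1.le hθ2 rfl
  refine div_le_of_le_mul₀ (norm_nonneg _) (Real.exp_pos _).le (hmain.trans ?_)
  refine mul_le_mul_of_nonneg_right (Real.exp_le_exp.2 ?_) (norm_nonneg _)
  have hy1 : 1 ≤ (1 / (2 * r)) ^ β := by
    refine Real.one_le_rpow ?_ hβ0.le
    rw [le_div_iff₀ (by positivity)]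
    linarith
  have hfl : (1 / (2 * r)) ^ β / 2 ≤ (⌊(1 / (2 * r)) ^ (1 / α)⌋₊ : ℝ) := by
    rw [← hβ]
    have h1 := Nat.lt_floor_add_one ((1 / (2 * r)) ^ β)
    have h2 : (1 : ℝ) ≤ (⌊(1 / (2 * r)) ^ β⌋₊ : ℝ) := by
      exact_mod_cast Nat.le_floor (by exact_mod_cast hy1)
    linarith
  have hsplit : (1 / (2 * r)) ^ β = (1 / 2) ^ β * r ^ (-β) := by
    rw [Real.rpow_neg hr.le, ← Real.inv_rpow hr.le, ← Real.mul_rpow (by norm_num) (by positivity)]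
    congr 1
    field_simp
  have hpow : (r ^ (3 * β / 7)) ^ 2 * r ^ (-β) = r ^ (-β / 7) := by
    rw [← Real.rpow_natCast, ← Real.rpow_mul hr.le, ← Real.rpow_add hr]
    congr 1
    push_cast
    ring
  rw [hsplit] at hfl
  have key := mul_le_mul_of_nonneg_left hfl (show 0 ≤ Real.exp (-1) *
    (Real.exp ρ / (1 + Real.exp ρ) ^ 2) * ((r ^ (3 * β / 7)) ^ 2 / (2 * π ^ 2)) by positivity)
  rw [← hpow]
  refine (neg_le_neg key).trans_eq ?_
  ring
end
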